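/- arXiv:2307.06907 — 2 statements merged into one kernel-verified Lean document; each statement's English description precedes it below -/
import Mathlib

section
/- The difference ideal is Katětov below the Hindman ideal via the identity map; more precisely, Δ ≤_K FS witnessed by the identity: for every infinite A ⊆ ℕ with increasing enumeration (a_n), the set B = {∑_{i≤n} a_i : n ∈ ℕ} satisfies: for every finite K ⊆ ℕ there is a finite L ⊆ ℕ with Δ(B \ L) ⊆ FS(A \ K). -/
/-- `FS(A)`: all finite nonempty sums of distinct elements of `A`. -/
def FS (A : Set ℕ) : Set ℕ :=
  {m : ℕ | ∃ s : Finset ℕ, s.Nonempty ∧ ↑s ⊆ A ∧ m = ∑ i ∈ s, i}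

/-- `Δ(B)`: all positive differences of distinct elements of `B`. -/
def Del (B : Set ℕ) : Set ℕ :=
  {d : ℕ | ∃ a ∈ B, ∃ b ∈ B, b < a ∧ d = a - b}

/-! For `m < n` the difference of the `n`-th and the `m`-th partial sum of `a` telescopes to
`∑_{m<i≤n} a_i`, which is a sum of distinct elements of `{a_i : i > m}` as soon as `a` is injective.
An injective sequence meets a finite set `K` only at indices up to some `N`, so removing the partial
sums with index at most `N` keeps all these differences in `FS(A \ K)`. -/

theorem FS_mono {A B : Set ℕ} (h : A ⊆ B) : FS A ⊆ FS B := by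
  rintro _ ⟨s, hs, hsA, rfl⟩
  exact ⟨s, hs, hsA.trans h, rfl⟩

theorem Del_mono {A B : Set ℕ} (h : A ⊆ B) : Del A ⊆ Del B := by
  rintro _ ⟨a, ha, b, hb, hlt, rfl⟩
  exact ⟨a, h ha, b, h hb, hlt, rfl⟩

theorem sum_mem_FS_image {ι : Type*} {a : ι → ℕ} {s : Finset ι} (hs : s.Nonempty)
    (ha : Set.InjOn a s) : ∑ i ∈ s, a i ∈ FS (a '' s) := by
  classical
  exact ⟨s.image a, hs.image a, Finset.coe_image.subset, by rw [Finset.sum_image ha]⟩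

theorem Del_image_sum_range_subset_FS {a : ℕ → ℕ} {N : ℕ} (ha : Set.InjOn a (Set.Ioi N)) :
    Del ((fun n : ℕ => ∑ i ∈ Finset.range (n + 1), a i) '' Set.Ioi N) ⊆ FS (a '' Set.Ioi N) := by
  rintro _ ⟨_, ⟨n, -, rfl⟩, _, ⟨m, hm, rfl⟩, hlt, rfl⟩
  have hmn : m + 1 < n + 1 :=
    ((Finset.sum_mono_set a).comp Finset.range_mono).reflect_lt hlt
  have htail : (Finset.Ico (m + 1) (n + 1) : Set ℕ) ⊆ Set.Ioi N := by
    intro i hi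
    exact Nat.lt_trans hm (Finset.mem_Ico.mp hi).1
  have htelescope : ∑ i ∈ Finset.range (n + 1), a i - ∑ i ∈ Finset.range (m + 1), a i =
      ∑ i ∈ Finset.Ico (m + 1) (n + 1), a i :=
    Nat.sub_eq_of_eq_add' (Finset.sum_range_add_sum_Ico a hmn.le).symm
  have hmem : ∑ i ∈ Finset.Ico (m + 1) (n + 1), a i ∈ FS (a '' Finset.Ico (m + 1) (n + 1)) :=
    sum_mem_FS_image (Finset.nonempty_Ico.mpr hmn) (ha.mono htail)
  exact htelescope ▸ FS_mono (Set.image_mono htail) hmem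

theorem exists_image_Ioi_subset_range_sdiff {α : Type*} {a : ℕ → α} (ha : Function.Injective a)
    {K : Set α} (hK : K.Finite) : ∃ N : ℕ, a '' Set.Ioi N ⊆ Set.range a \ K := by
  obtain ⟨N, hN⟩ := (hK.preimage ha.injOn).bddAbove
  refine ⟨N, ?_⟩
  rintro _ ⟨i, hi, rfl⟩
  exact ⟨Set.mem_range_self i, fun hiK => (hN hiK).not_gt hi⟩

theorem Del_le_FS_general {a : ℕ → ℕ} (ha : Function.Injective a) {K : Set ℕ} (hK : K.Finite) :
    ∃ L : Set ℕ, L.Finite ∧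
      Del ((Set.range fun n : ℕ => ∑ i ∈ Finset.range (n + 1), a i) \ L)
        ⊆ FS (Set.range a \ K) := by
  obtain ⟨N, hN⟩ := exists_image_Ioi_subset_range_sdiff ha hK
  let S : ℕ → ℕ := fun n => ∑ i ∈ Finset.range (n + 1), a i
  refine ⟨S '' Set.Iic N, (Set.finite_Iic N).image S, ?_⟩
  calc Del (Set.range S \ S '' Set.Iic N)
      ⊆ Del (S '' Set.Ioi N) := Del_mono <| by
        rw [← Set.compl_Iic]
        exact Set.range_sdiff_image_subset S (Set.Iic N)
    _ ⊆ FS (a '' Set.Ioi N) := Del_image_sum_range_subset_FS ha.injOn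
    _ ⊆ FS (Set.range a \ K) := FS_mono hN

/-- `Δ ≤_K FS` witnessed by the identity: for every infinite `A ⊆ ℕ` with increasing
enumeration `(a_n)`, the set `B = {∑_{i≤n} a_i : n ∈ ℕ}` of partial sums satisfies:
for every finite `K ⊆ ℕ` there is a finite `L ⊆ ℕ` with `Δ(B \ L) ⊆ FS(A \ K)`. -/
theorem Del_le_FS (A : Set ℕ) (hA : A.Infinite) :
    ∀ K : Set ℕ, K.Finite →
      ∃ L : Set ℕ, L.Finite ∧
        Del ((Set.range fun n : ℕ => ∑ i ∈ Finset.range (n + 1), Nat.nth (· ∈ A) i) \ L)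
          ⊆ FS (A \ K) := by
  intro K hK
  have hrange : Set.range (Nat.nth (· ∈ A)) = A := Nat.range_nth_of_infinite hA
  simpa only [hrange] using Del_le_FS_general (Nat.nth_injective (p := (· ∈ A)) hA) hK
end

section
/- If I is an ideal on Λ, then I is P⁻(Λ) (respectively P⁻) if and only if for every partition A of Λ (respectively of any I-positive set C) into sets belonging to I, there exists an I-positive set B (with B ⊆ C in the second case) such that B ∩ A is finite for each A ∈ A. -/
/-- An ideal on a countably infinite set `Λ`. -/
def IsIdealOn (Λ : Type*) (I : Set (Set Λ)) : Prop :=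
  I.Nonempty ∧
  (∀ A B : Set Λ, A ⊆ B → B ∈ I → A ∈ I) ∧
  (∀ A B : Set Λ, A ∈ I → B ∈ I → A ∪ B ∈ I) ∧
  (∀ A : Set Λ, A.Finite → A ∈ I) ∧
  (Set.univ : Set Λ) ∉ I

/-- `I` is `P⁻(Λ)`: for every `⊆`-decreasing sequence `A_n ∈ I⁺` with `A_0 = Λ` and
`A_n \ A_{n+1} ∈ I`, there is `B ∈ I⁺` with `B ⊆* A_n` for each `n`. -/
def PminusLambda {Λ : Type*} (I : Set (Set Λ)) : Prop :=
  ∀ A : ℕ → Set Λ, A 0 = Set.univ → (∀ n, A n ∉ I) → (∀ n, A (n + 1) ⊆ A n) →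
    (∀ n, A n \ A (n + 1) ∈ I) →
    ∃ B : Set Λ, B ∉ I ∧ ∀ n, (B \ A n).Finite

/-- `I` is `P⁻`: the same as `P⁻(Λ)` but without requiring `A_0 = Λ`. -/
def Pminus {Λ : Type*} (I : Set (Set Λ)) : Prop :=
  ∀ A : ℕ → Set Λ, (∀ n, A n ∉ I) → (∀ n, A (n + 1) ⊆ A n) →
    (∀ n, A n \ A (n + 1) ∈ I) →
    ∃ B : Set Λ, B ∉ I ∧ ∀ n, (B \ A n).Finite

/-!
For decreasing sequences starting at a positive set `C`, and for partitions of `C`, the requirement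
amounts to this: for every sequence of sets in `I`, some positive subset of `C` has finite
intersection with each of its terms. A decreasing sequence `A` starting at `C` gives the sequence
of differences `A n \ A (n + 1)`, and a sequence `P` gives back the sets
`C \ ⋃ k < n, P k`. A partition of a countable set has only countably many pieces; conversely a
sequence `P` covering `C` is disjointed into a partition of `C`, and the part of `C` that `P`
leaves uncovered is either itself a positive set avoiding `P`, or lies in `I` and can be added
to every `P n`.
-/

section

variable {α : Type*} {I : Set (Set α)} {C : Set α}

/-- The property P⁻ restricted to decreasing sequences that start at `C`; thus P⁻(Λ) is the case
`C = univ`. -/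
def PminusOn (I : Set (Set α)) (C : Set α) : Prop :=
  ∀ A : ℕ → Set α, A 0 = C → (∀ n, A n ∉ I) → (∀ n, A (n + 1) ⊆ A n) →
    (∀ n, A n \ A (n + 1) ∈ I) →
    ∃ B : Set α, B ∉ I ∧ ∀ n, (B \ A n).Finite

/-- Some `I`-positive subset of `C` is almost disjoint from all terms of any given sequence in `I`;
the common form of P⁻ and of the partition property. -/
def AvoidsSequences (I : Set (Set α)) (C : Set α) : Prop :=
  ∀ P : ℕ → Set α, (∀ n, P n ∈ I) →
    ∃ B : Set α, B ∉ I ∧ B ⊆ C ∧ ∀ n, (B ∩ P n).Finite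

/-- The partition property: some `I`-positive subset of `C` is almost disjoint from all pieces of
any given partition of `C` into sets in `I`. The empty set is allowed as a piece. -/
def AvoidsPartitions (I : Set (Set α)) (C : Set α) : Prop :=
  ∀ 𝒜 : Set (Set α), (∀ A ∈ 𝒜, A ∈ I) → 𝒜.PairwiseDisjoint id → ⋃₀ 𝒜 = C →
    ∃ B : Set α, B ∉ I ∧ B ⊆ C ∧ ∀ A ∈ 𝒜, (B ∩ A).Finite

theorem pminus_iff_forall_pminusOn : Pminus I ↔ ∀ C ∉ I, PminusOn I C :=
  ⟨fun h _ _ A _ => h A, fun h A hpos => h (A 0) (hpos 0) A rfl hpos⟩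

theorem IsIdealOn.exists_orderIdeal (hI : IsIdealOn α I) :
    ∃ J : Order.Ideal (Set α), (J : Set (Set α)) = I := by
  obtain ⟨hne, hsub, hunion, -, -⟩ := hI
  exact ⟨Order.IsIdeal.toIdeal ⟨fun _ _ hle hmem => hsub _ _ hle hmem, hne,
    fun A hA B hB => ⟨A ∪ B, hunion A B hA hB, Set.subset_union_left, Set.subset_union_right⟩⟩, rfl⟩

theorem sdiff_notMem_of_mem {β : Type*} [GeneralizedCoheytingAlgebra β] {J : Order.Ideal β}
    {a b : β} (ha : a ∉ J) (hb : b ∈ J) : a \ b ∉ J :=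
  fun hab => ha (J.lower le_sdiff_sup (Order.Ideal.sup_mem hab hb))

theorem countable_of_pairwiseDisjoint_id [Countable α] {𝒜 : Set (Set α)}
    (h𝒜 : 𝒜.PairwiseDisjoint id) : 𝒜.Countable := by
  let _ : TopologicalSpace α := ⊥
  have : DiscreteTopology α := ⟨rfl⟩
  have hnonempty : (𝒜 \ {∅}).Countable :=
    (h𝒜.subset Set.sdiff_subset).countable_of_isOpen (fun _ _ => isOpen_discrete _)
      fun _ hA => Set.nonempty_iff_ne_empty.mpr hA.2
  exact hnonempty.of_sdiff (Set.countable_singleton ∅)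

theorem PminusOn.avoidsSequences {J : Order.Ideal (Set α)} (hfin : ∀ A : Set α, A.Finite → A ∈ J)
    (hC : C ∉ J) (h : PminusOn (J : Set (Set α)) C) : AvoidsSequences (J : Set (Set α)) C := by
  intro P hP
  let A : ℕ → Set α := fun n => C \ ⋃ k < n, P k
  have hA_zero : A 0 = C := by simp [A]
  have hA_succ (n : ℕ) : A (n + 1) = A n \ P n := by
    simp only [A, Set.biUnion_lt_succ, Set.sdiff_sdiff]
  have hA_pos (n : ℕ) : A n ∉ J := by
    induction n with
    | zero => rwa [hA_zero]
    | succ n ih => exact hA_succ n ▸ sdiff_notMem_of_mem ih (hP n)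
  have hA_sdiff (n : ℕ) : A n \ A (n + 1) ∈ J := by
    rw [hA_succ, Set.sdiff_sdiff_right_self]
    exact J.lower Set.inter_subset_right (hP n)
  obtain ⟨B, hB, hBA⟩ :=
    h A hA_zero hA_pos (fun n => hA_succ n ▸ Set.sdiff_subset) hA_sdiff
  have hBC : B ∩ C ∉ J := by
    have hmem : B \ C ∈ J := hfin _ (hA_zero ▸ hBA 0)
    rw [← Set.sdiff_sdiff_right_self]
    exact sdiff_notMem_of_mem hB hmem
  refine ⟨B ∩ C, hBC, Set.inter_subset_right, fun n => (hBA (n + 1)).subset ?_⟩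
  rintro x ⟨⟨hxB, -⟩, hxP⟩
  exact ⟨hxB, fun hxA => (hA_succ n ▸ hxA).2 hxP⟩

theorem AvoidsSequences.pminusOn (h : AvoidsSequences I C) : PminusOn I C := by
  intro A hA_zero _ _ hA_sdiff
  obtain ⟨B, hB, hBC, hBA⟩ := h (fun n => A n \ A (n + 1)) hA_sdiff
  refine ⟨B, hB, fun n => ?_⟩
  induction n with
  | zero => simp [hA_zero, Set.sdiff_eq_empty.mpr hBC]
  | succ n ih =>
    refine (ih.union (hBA n)).subset fun x ⟨hxB, hxA⟩ => ?_
    by_cases hx : x ∈ A n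
    · exact Or.inr ⟨hxB, hx, hxA⟩
    · exact Or.inl ⟨hxB, hx⟩

theorem AvoidsSequences.avoidsPartitions [Countable α] (hempty : ∅ ∈ I)
    (h : AvoidsSequences I C) : AvoidsPartitions I C := by
  intro 𝒜 h𝒜 hdisj _
  obtain ⟨P, hP⟩ := ((countable_of_pairwiseDisjoint_id hdisj).insert ∅).exists_eq_range
    (Set.insert_nonempty ∅ 𝒜)
  have hPI (n : ℕ) : P n ∈ I :=
    Set.forall_mem_insert.mpr ⟨hempty, h𝒜⟩ (P n) (hP ▸ Set.mem_range_self n)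
  obtain ⟨B, hB, hBC, hBP⟩ := h P hPI
  refine ⟨B, hB, hBC, fun A hA => ?_⟩
  obtain ⟨n, rfl⟩ : A ∈ Set.range P := hP ▸ Set.mem_insert_of_mem ∅ hA
  exact hBP n

theorem AvoidsPartitions.exists_of_subset_iUnion (hI : IsLowerSet I) (h : AvoidsPartitions I C)
    {P : ℕ → Set α} (hP : ∀ n, P n ∈ I) (hCP : C ⊆ ⋃ n, P n) :
    ∃ B : Set α, B ∉ I ∧ B ⊆ C ∧ ∀ n, (B ∩ P n).Finite := by
  let D : ℕ → Set α := fun n => C ∩ disjointed P n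
  have hD_mem : ∀ A ∈ Set.range D, A ∈ I := Set.forall_mem_range.mpr fun n =>
    hI (Set.inter_subset_right.trans (disjointed_subset P n)) (hP n)
  have hD_disj : (Set.range D).PairwiseDisjoint id := Pairwise.range_pairwise fun _ _ hmn =>
    (disjoint_disjointed P hmn).mono Set.inter_subset_right Set.inter_subset_right
  have hD_union : ⋃₀ Set.range D = C := by
    rw [Set.sUnion_range, ← Set.inter_iUnion, iUnion_disjointed, Set.inter_eq_left.mpr hCP]
  obtain ⟨B, hB, hBC, hBD⟩ := h (Set.range D) hD_mem hD_disj hD_union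
  have hcover (n : ℕ) : B ∩ P n ⊆ ⋃ k ∈ Finset.Iic n, B ∩ D k := by
    rintro x ⟨hxB, hxP⟩
    have hx : x ∈ ⋃ k ∈ Finset.Iic n, disjointed P k := by
      rw [biUnion_Iic_disjointed]
      exact le_partialSups P n hxP
    obtain ⟨k, hk, hxk⟩ := Set.mem_iUnion₂.mp hx
    exact Set.mem_biUnion hk ⟨hxB, hBC hxB, hxk⟩
  exact ⟨B, hB, hBC, fun n => ((Finset.Iic n).finite_toSet.biUnion fun k _ =>
    hBD _ (Set.mem_range_self k)).subset (hcover n)⟩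

theorem AvoidsPartitions.avoidsSequences {J : Order.Ideal (Set α)}
    (h : AvoidsPartitions (J : Set (Set α)) C) : AvoidsSequences (J : Set (Set α)) C := by
  intro P hP
  let R : Set α := C \ ⋃ n, P n
  by_cases hR : R ∈ J
  · have hcover : C ⊆ ⋃ n, (P n ∪ R) := by
      rw [← Set.iUnion_union, Set.union_sdiff_self]
      exact Set.subset_union_right
    obtain ⟨B, hB, hBC, hBP⟩ :=
      h.exists_of_subset_iUnion J.lower (fun n => Order.Ideal.sup_mem (hP n) hR) hcover
    exact ⟨B, hB, hBC, fun n =>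
      (hBP n).subset (Set.inter_subset_inter_right B Set.subset_union_left)⟩
  · have hdisj (n : ℕ) : Disjoint R (P n) :=
      Set.disjoint_sdiff_left.mono_right (Set.subset_iUnion P n)
    exact ⟨R, hR, Set.sdiff_subset, fun n => (hdisj n).inter_eq ▸ Set.finite_empty⟩

theorem pminusOn_iff_avoidsPartitions [Countable α] {J : Order.Ideal (Set α)}
    (hfin : ∀ A : Set α, A.Finite → A ∈ J) (hC : C ∉ J) :
    PminusOn (J : Set (Set α)) C ↔ AvoidsPartitions (J : Set (Set α)) C :=
  ⟨fun h => (h.avoidsSequences hfin hC).avoidsPartitions J.bot_mem,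
    fun h => h.avoidsSequences.pminusOn⟩

end

/-- An ideal `I` on `Λ` is `P⁻(Λ)` (resp. `P⁻`) iff for every partition of `Λ`
(resp. of any `I`-positive set `C`) into sets from `I`, there is an `I`-positive `B`
(with `B ⊆ C` in the second case) meeting each piece of the partition in a finite
set. -/
theorem Pminus_iff_partition {Λ : Type*} [Countable Λ] [Infinite Λ]
    (I : Set (Set Λ)) (hI : IsIdealOn Λ I) :
    (PminusLambda I ↔
      ∀ 𝒜 : Set (Set Λ), (∀ A ∈ 𝒜, A ∈ I) → 𝒜.PairwiseDisjoint id → ⋃₀ 𝒜 = Set.univ →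
        ∃ B : Set Λ, B ∉ I ∧ ∀ A ∈ 𝒜, (B ∩ A).Finite) ∧
    (Pminus I ↔
      ∀ C : Set Λ, C ∉ I →
        ∀ 𝒜 : Set (Set Λ), (∀ A ∈ 𝒜, A ∈ I) → 𝒜.PairwiseDisjoint id → ⋃₀ 𝒜 = C →
          ∃ B : Set Λ, B ∉ I ∧ B ⊆ C ∧ ∀ A ∈ 𝒜, (B ∩ A).Finite) := by
  obtain ⟨J, rfl⟩ := hI.exists_orderIdeal
  obtain ⟨-, -, -, hfin, huniv⟩ := hI
  constructor
  · refine (pminusOn_iff_avoidsPartitions hfin huniv).trans ?_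
    simp only [AvoidsPartitions, Set.subset_univ, true_and]
  · exact pminus_iff_forall_pminusOn.trans
      (forall₂_congr fun C hC => pminusOn_iff_avoidsPartitions hfin hC)
end
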